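/- For LOC(H,T) with any α-type input distribution, I(⟨X⟩;⟨Y⟩) = J(rank(X);rank(Y)) + I(rank(X);rank(Y)), where Y = XH. -/

import Mathlib

open scoped Classical
open Finset Matrix Module

noncomputable section

/-- χ_m[r] = (q^m − 1)(q^m − q)⋯(q^m − q^{r−1}), with χ_m[0] = 1. -/
def chi (q m r : ℕ) : ℕ := ∏ i ∈ Finset.range r, (q ^ m - q ^ i)

/-- χ̃_m[r] = χ_m[r] · q^{−mr}, as a real number. -/
def chiTilde (q m r : ℕ) : ℝ := (chi q m r : ℝ) / (q : ℝ) ^ (m * r)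

/-- Gaussian binomial [m choose r]_q = χ_m[r]/χ_r[r], as a real number. -/
def gaussR (q m r : ℕ) : ℝ := (chi q m r : ℝ) / (chi q r r : ℝ)

variable {F : Type} [Field F] [Fintype F]

/-- Column space of a matrix. -/
def colSpace {m n : ℕ} (A : Matrix (Fin m) (Fin n) F) : Submodule F (Fin m → F) :=
  LinearMap.range A.mulVecLin

/-- Row space of a matrix. -/
def rowSpace {m n : ℕ} (A : Matrix (Fin m) (Fin n) F) : Submodule F (Fin n → F) :=
  colSpace Aᵀ

/-- Pr{XH = Y} for a random transfer matrix H with PMF `pH`, input `X`, output `Y`. -/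
def prXY {k M N : ℕ} (pH : Matrix (Fin M) (Fin N) F → ℝ)
    (X : Matrix (Fin k) (Fin M) F) (Y : Matrix (Fin k) (Fin N) F) : ℝ :=
  ∑ Hm : Matrix (Fin M) (Fin N) F, if X * Hm = Y then pH Hm else 0

/-- A PMF on a finite type: nonnegative and summing to one. -/
def IsPMF {Ω : Type*} [Fintype Ω] (p : Ω → ℝ) : Prop :=
  (∀ x, 0 ≤ p x) ∧ ∑ x, p x = 1

/-- α-type distribution: matrices with the same row space are equiprobable. -/
def IsAlphaType {T M : ℕ} (p : Matrix (Fin T) (Fin M) F → ℝ) : Prop :=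
  ∀ X X' : Matrix (Fin T) (Fin M) F, rowSpace X = rowSpace X' → p X = p X'

/-- Mutual information I(f;g) (base 2) between two functions of a finitely
distributed random element with PMF `p`; terms of zero probability vanish. -/
def mutualInfo {Ω A B : Type*} [Fintype Ω] (p : Ω → ℝ) (f : Ω → A) (g : Ω → B) : ℝ :=
  ∑ ω : Ω, p ω * Real.logb 2
    ((∑ ω' : Ω, if f ω' = f ω ∧ g ω' = g ω then p ω' else 0) /
      ((∑ ω' : Ω, if f ω' = f ω then p ω' else 0) *
        (∑ ω' : Ω, if g ω' = g ω then p ω' else 0)))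

/-- Joint PMF of the input X and the independent transfer matrix H;
the channel output is Y = XH, i.e., `ω.1 * ω.2`. -/
def jointPMF {T M N : ℕ} (pX : Matrix (Fin T) (Fin M) F → ℝ)
    (pH : Matrix (Fin M) (Fin N) F → ℝ) :
    Matrix (Fin T) (Fin M) F × Matrix (Fin M) (Fin N) F → ℝ :=
  fun ω => pX ω.1 * pH ω.2

/-- I(X;Y) for the LOC with input PMF `pX` and transfer PMF `pH`. -/
def miXY {T M N : ℕ} (pX : Matrix (Fin T) (Fin M) F → ℝ)
    (pH : Matrix (Fin M) (Fin N) F → ℝ) : ℝ :=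
  mutualInfo (jointPMF pX pH) (fun ω => ω.1) (fun ω => ω.1 * ω.2)

/-- I(⟨X⟩;⟨Y⟩), mutual information between the column spaces. -/
def miColCol {T M N : ℕ} (pX : Matrix (Fin T) (Fin M) F → ℝ)
    (pH : Matrix (Fin M) (Fin N) F → ℝ) : ℝ :=
  mutualInfo (jointPMF pX pH) (fun ω => colSpace ω.1) (fun ω => colSpace (ω.1 * ω.2))

/-- I(⟨X^T⟩;⟨Y^T⟩), mutual information between the row spaces. -/
def miRowRow {T M N : ℕ} (pX : Matrix (Fin T) (Fin M) F → ℝ)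
    (pH : Matrix (Fin M) (Fin N) F → ℝ) : ℝ :=
  mutualInfo (jointPMF pX pH) (fun ω => rowSpace ω.1) (fun ω => rowSpace (ω.1 * ω.2))

/-- I(rank(X);rank(Y)). -/
def miRankRank {T M N : ℕ} (pX : Matrix (Fin T) (Fin M) F → ℝ)
    (pH : Matrix (Fin M) (Fin N) F → ℝ) : ℝ :=
  mutualInfo (jointPMF pX pH) (fun ω => ω.1.rank) (fun ω => (ω.1 * ω.2).rank)

/-- Pr{rank(X) = r}. -/
def prRankX {T M : ℕ} (pX : Matrix (Fin T) (Fin M) F → ℝ) (r : ℕ) : ℝ :=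
  ∑ x : Matrix (Fin T) (Fin M) F, if x.rank = r then pX x else 0

/-- Pr{rank(X) = r, rank(Y) = s} where Y = XH. -/
def prRankXY {T M N : ℕ} (pX : Matrix (Fin T) (Fin M) F → ℝ)
    (pH : Matrix (Fin M) (Fin N) F → ℝ) (r s : ℕ) : ℝ :=
  ∑ ω : Matrix (Fin T) (Fin M) F × Matrix (Fin M) (Fin N) F,
    if ω.1.rank = r ∧ (ω.1 * ω.2).rank = s then jointPMF pX pH ω else 0

/-- J(rank(X);rank(Y)) = ∑_{r,s} Pr{rank X = r, rank Y = s} · log₂(χ_T[s]/χ_r[s]). -/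
def Jrank (q : ℕ) {T M N : ℕ} (pX : Matrix (Fin T) (Fin M) F → ℝ)
    (pH : Matrix (Fin M) (Fin N) F → ℝ) : ℝ :=
  ∑ r ∈ Finset.range (T + 1), ∑ s ∈ Finset.range (T + 1),
    prRankXY pX pH r s * Real.logb 2 ((chi q T s : ℝ) / (chi q r s : ℝ))

/-- Row-space-symmetric LOC: the transition probability P(Y|X) for ⟨Y⟩ ⊆ ⟨X⟩
is determined by the row spaces of the input and output matrices. -/
def RowSpaceSymmetric (T : ℕ) {M N : ℕ} (pH : Matrix (Fin M) (Fin N) F → ℝ) : Prop :=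
  ∀ (X X' : Matrix (Fin T) (Fin M) F) (Y Y' : Matrix (Fin T) (Fin N) F),
    colSpace Y ≤ colSpace X → colSpace Y' ≤ colSpace X' →
    rowSpace X = rowSpace X' → rowSpace Y = rowSpace Y' →
    prXY pH X Y = prXY pH X' Y'

/-- Pr{⟨XH⟩ = V} for a fixed input matrix X. -/
def prColY (T : ℕ) {M N : ℕ} (pH : Matrix (Fin M) (Fin N) F → ℝ)
    (X : Matrix (Fin T) (Fin M) F) (V : Submodule F (Fin T → F)) : ℝ :=
  ∑ Hm : Matrix (Fin M) (Fin N) F, if colSpace (X * Hm) = V then pH Hm else 0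

/-- Unique subspace degradation: Pr{⟨XH⟩ = V} is the same for all inputs X
with the same column space. -/
def UniqueSubspaceDegradation (T : ℕ) {M N : ℕ}
    (pH : Matrix (Fin M) (Fin N) F → ℝ) : Prop :=
  ∀ (V : Submodule F (Fin T → F)) (X X' : Matrix (Fin T) (Fin M) F),
    colSpace X = colSpace X' → prColY T pH X V = prColY T pH X' V

/-- Rank-symmetric LOC: P(Y|X) = μ(rank X, rank Y) when ⟨Y⟩ ⊆ ⟨X⟩, and 0 otherwise. -/
def RankSymmetric (T : ℕ) {M N : ℕ} (pH : Matrix (Fin M) (Fin N) F → ℝ) : Prop :=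
  ∃ μ : ℕ → ℕ → ℝ, (∀ a b, 0 ≤ μ a b ∧ μ a b ≤ 1) ∧
    ∀ (X : Matrix (Fin T) (Fin M) F) (Y : Matrix (Fin T) (Fin N) F),
      prXY pH X Y = if colSpace Y ≤ colSpace X then μ X.rank Y.rank else 0

/-- rank*(H) = max{r : Pr{rank H = r} > 0}. -/
def rankStar {M N : ℕ} (pH : Matrix (Fin M) (Fin N) F → ℝ) : ℕ :=
  sSup {r : ℕ | 0 < ∑ Hm : Matrix (Fin M) (Fin N) F, if Hm.rank = r then pH Hm else 0}

/-!
Since ⟨XH⟩ ⊆ ⟨X⟩ and left multiplication of X by an invertible matrix preserves an α-type input law,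
(⟨X⟩, ⟨Y⟩) is a random flag V ⊆ U of subspaces whose joint law is invariant under the general linear
group. That group acts transitively on flags of given dimensions, so given the dimensions the flag
is uniform: every probability of a rank event is the number of subspaces or flags of that shape
times the probability of a single one. In the likelihood ratio behind the mutual information the
number of choices for U cancels, and what is left is the number of s-dimensional subspaces of the
whole space over the number of those inside U, that is, χ_T[s]/χ_r[s].
-/

section Law

variable {Ω A B : Type*} [Fintype Ω] {p : Ω → ℝ}

/-- The law of the random element `f` on the finite space `Ω` with weights `p`:
`law p f a` is Pr{f = a}. The weights need not sum to one. -/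
def law (p : Ω → ℝ) (f : Ω → A) (a : A) : ℝ :=
  ∑ ω, if f ω = a then p ω else 0

theorem mutualInfo_eq_sum_law (p : Ω → ℝ) (f : Ω → A) (g : Ω → B) :
    mutualInfo p f g = ∑ ω, p ω * Real.logb 2
      (law p (fun ω' => (f ω', g ω')) (f ω, g ω) / (law p f (f ω) * law p g (g ω))) := by
  simp only [mutualInfo, law, Prod.mk.injEq]

theorem law_prod_swap (p : Ω → ℝ) (f : Ω → A) (g : Ω → B) (a : A) (b : B) :
    law p (fun ω => (g ω, f ω)) (b, a) = law p (fun ω => (f ω, g ω)) (a, b) := by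
  simp only [law, Prod.mk.injEq, and_comm]

theorem law_eq_zero {f : Ω → A} {a : A} (h : ∀ ω, f ω ≠ a) : law p f a = 0 :=
  Finset.sum_eq_zero fun ω _ => if_neg (h ω)

theorem law_pos (hp : ∀ ω, 0 ≤ p ω) (f : Ω → A) {ω : Ω} (hω : 0 < p ω) : 0 < law p f (f ω) := by
  refine Finset.sum_pos' (fun ω' _ => ?_) ⟨ω, mem_univ ω, by rwa [if_pos rfl]⟩
  split_ifs
  exacts [hp ω', le_rfl]

theorem sum_law_mul {s : Finset A} (p : Ω → ℝ) {f : Ω → A} (hf : ∀ ω, f ω ∈ s) (c : A → ℝ) :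
    ∑ a ∈ s, law p f a * c a = ∑ ω, p ω * c (f ω) := by
  simp only [law, Finset.sum_mul, ite_mul, zero_mul]
  rw [Finset.sum_comm]
  exact Finset.sum_congr rfl fun ω _ => by rw [Finset.sum_ite_eq, if_pos (hf ω)]

theorem law_comp [Fintype A] (p : Ω → ℝ) (f : Ω → A) (φ : A → B) :
    law p (φ ∘ f) = law (law p f) φ := by
  ext b
  simpa [law] using (sum_law_mul p (fun ω => mem_univ (f ω)) fun a => if φ a = b then 1 else 0).symm

theorem law_apply_of_semiconj {f : Ω → A} {σ : Ω → Ω} {τ : A → A} (hσ : σ.Bijective)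
    (hτ : τ.Injective) (hp : ∀ ω, p (σ ω) = p ω) (h : Function.Semiconj f σ τ) (a : A) :
    law p f (τ a) = law p f a := by
  simp only [law]
  rw [← hσ.sum_comp]
  exact Finset.sum_congr rfl fun ω _ => by rw [h ω, hp, hτ.eq_iff]

theorem law_comp_apply_eq_card_mul [Finite A] {f : Ω → A} {R : A → Prop} (hR : ∀ ω, R (f ω))
    (φ : A → B) {a : A} (h : ∀ a', R a' → φ a' = φ a → law p f a' = law p f a) :
    law p (φ ∘ f) (φ a) = Nat.card {a' // R a' ∧ φ a' = φ a} * law p f a := by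
  have := Fintype.ofFinite A
  have law_of_fibre (a' : A) : (if φ a' = φ a then law p f a' else 0) =
      if R a' ∧ φ a' = φ a then law p f a else 0 := by
    by_cases hR' : R a'
    · simp only [hR', true_and]
      exact if_ctx_congr Iff.rfl (h a' hR') fun _ => rfl
    · simp [hR', law_eq_zero (f := f) fun ω (hω : f ω = a') => hR' (hω ▸ hR ω)]
  rw [law_comp, law, Finset.sum_congr rfl fun a' _ => law_of_fibre a', ← Finset.sum_filter,
    Finset.sum_const, nsmul_eq_mul, Nat.card_eq_fintype_card, Fintype.card_subtype]

end Law

section Transitivity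

variable {K E : Type*} [DivisionRing K] [AddCommGroup E] [Module K E] [FiniteDimensional K E]

theorem exists_linearEquiv_map_eq {A A' : Submodule K E} (h : finrank K A = finrank K A') :
    ∃ e : E ≃ₗ[K] E, A.map (e : E →ₗ[K] E) = A' := by
  obtain ⟨e, he⟩ := Submodule.exists_linearEquiv_restrict_eq (LinearEquiv.ofFinrankEq A A' h)
  refine ⟨e, Submodule.eq_of_le_of_finrank_eq ?_ ((e.finrank_map_eq A).trans h)⟩
  rintro _ ⟨x, hx, rfl⟩
  exact he ⟨x, hx⟩ ▸ Subtype.prop _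

theorem exists_linearEquiv_map_eq_map_eq {A B B' : Submodule K E} (hB : B ≤ A) (hB' : B' ≤ A)
    (h : finrank K B = finrank K B') :
    ∃ e : E ≃ₗ[K] E, A.map (e : E →ₗ[K] E) = A ∧ B.map (e : E →ₗ[K] E) = B' := by
  obtain ⟨f, hf⟩ := exists_linearEquiv_map_eq (A := B.submoduleOf A) (A' := B'.submoduleOf A) <| by
    rwa [(Submodule.submoduleOfEquivOfLe hB).finrank_eq,
      (Submodule.submoduleOfEquivOfLe hB').finrank_eq]
  obtain ⟨e, he⟩ := Submodule.exists_linearEquiv_restrict_eq f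
  refine ⟨e, Submodule.eq_of_le_of_finrank_eq ?_ (e.finrank_map_eq A),
    Submodule.eq_of_le_of_finrank_eq ?_ ((e.finrank_map_eq B).trans h)⟩
  · rintro _ ⟨x, hx, rfl⟩
    exact he ⟨x, hx⟩ ▸ Subtype.prop _
  · rintro _ ⟨x, hx, rfl⟩
    have : f ⟨x, hB hx⟩ ∈ B'.submoduleOf A := hf ▸ Submodule.mem_map_of_mem hx
    exact he ⟨x, hB hx⟩ ▸ this

theorem exists_linearEquiv_map_flag_eq {A A' B B' : Submodule K E} (hBA : B ≤ A) (hBA' : B' ≤ A')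
    (hA : finrank K A = finrank K A') (hB : finrank K B = finrank K B') :
    ∃ e : E ≃ₗ[K] E, A.map (e : E →ₗ[K] E) = A' ∧ B.map (e : E →ₗ[K] E) = B' := by
  obtain ⟨e, rfl⟩ := exists_linearEquiv_map_eq hA
  obtain ⟨f, hfA, hfB⟩ := exists_linearEquiv_map_eq_map_eq (Submodule.map_mono hBA) hBA'
    ((e.finrank_map_eq B).trans hB)
  refine ⟨e.trans f, ?_, ?_⟩ <;> rwa [LinearEquiv.coe_trans, Submodule.map_comp]

end Transitivity

section Counting

theorem chi_eq_zero_of_lt (q : ℕ) {m r : ℕ} (h : m < r) : chi q m r = 0 :=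
  Finset.prod_eq_zero (mem_range.2 h) (Nat.sub_self _)

theorem chi_pos {q m r : ℕ} (hq : 1 < q) (h : r ≤ m) : 0 < chi q m r :=
  Finset.prod_pos fun _ hi => Nat.sub_pos_of_lt <|
    Nat.pow_lt_pow_right hq <| (mem_range.1 hi).trans_le h

theorem gaussR_pos {q m r : ℕ} (hq : 1 < q) (h : r ≤ m) : 0 < gaussR q m r :=
  div_pos (mod_cast chi_pos hq h) (mod_cast chi_pos hq le_rfl)

theorem gaussR_div_gaussR {q : ℕ} (hq : 1 < q) (m n r : ℕ) :
    gaussR q m r / gaussR q n r = chi q m r / chi q n r :=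
  div_div_div_cancel_right₀ (mod_cast (chi_pos hq le_rfl).ne') _ _

/-- The ordered bases of an `r`-dimensional subspace `W`, encoded as independent families of `E`
spanning `W` or as independent families of `W`. Subspaces are counted by grouping the independent
families of `E` according to their span. -/
def linearIndependentSpanEquiv {K E : Type*} [DivisionRing K] [AddCommGroup E] [Module K E] {r : ℕ}
    (W : Submodule K E) [FiniteDimensional K W] (hW : finrank K W = r) :
    {v : {v : Fin r → E // LinearIndependent K v} // Submodule.span K (Set.range v.1) = W} ≃
      {w : Fin r → W // LinearIndependent K w} where
  toFun v := ⟨fun i => ⟨v.1.1 i, v.2.le (Submodule.subset_span ⟨i, rfl⟩)⟩,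
    .of_comp W.subtype v.1.2⟩
  invFun w := ⟨⟨W.subtype ∘ w.1, w.2.map' _ W.ker_subtype⟩, by
    rw [Set.range_comp, Submodule.span_image, w.2.span_eq_top_of_card_eq_finrank' (by simp [hW]),
      Submodule.map_subtype_top]⟩

variable (K E : Type*) [DivisionRing K] [Fintype K] [AddCommGroup E] [Module K E] [Finite E]

theorem card_linearIndependent_eq_chi (r : ℕ) :
    Nat.card {v : Fin r → E // LinearIndependent K v} =
      chi (Fintype.card K) (finrank K E) r := by
  rcases le_or_gt r (finrank K E) with h | h
  · rw [card_linearIndependent h, chi, Finset.prod_range]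
  · have : IsEmpty {v : Fin r → E // LinearIndependent K v} :=
      ⟨fun v => by simpa using v.2.fintype_card_le_finrank.trans_lt h⟩
    rw [Nat.card_of_isEmpty, chi_eq_zero_of_lt _ h]

theorem card_submodule_finrank_eq_mul_chi (r : ℕ) :
    Nat.card {W : Submodule K E // finrank K W = r} * chi (Fintype.card K) r r =
      chi (Fintype.card K) (finrank K E) r := by
  have := Fintype.ofFinite {W : Submodule K E // finrank K W = r}
  let span (v : {v : Fin r → E // LinearIndependent K v}) :
      {W : Submodule K E // finrank K W = r} :=
    ⟨Submodule.span K (Set.range v.1), by simp [finrank_span_eq_card v.2]⟩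
  have card_fibre (W : {W : Submodule K E // finrank K W = r}) :
      Nat.card {v // span v = W} = chi (Fintype.card K) r r := by
    simp only [Subtype.ext_iff, span]
    rw [Nat.card_congr (linearIndependentSpanEquiv W.1 W.2), card_linearIndependent_eq_chi, W.2]
  rw [← card_linearIndependent_eq_chi, ← Nat.card_congr (Equiv.sigmaFiberEquiv span),
    Nat.card_sigma]
  simp [card_fibre, Nat.card_eq_fintype_card]

theorem card_submodule_finrank_eq (r : ℕ) :
    (Nat.card {W : Submodule K E // finrank K W = r} : ℝ) =
      gaussR (Fintype.card K) (finrank K E) r := by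
  rw [gaussR, eq_div_iff (mod_cast (chi_pos Fintype.one_lt_card le_rfl).ne')]
  exact_mod_cast card_submodule_finrank_eq_mul_chi K E r

variable {E} in
theorem card_submodule_le_and_finrank_eq (A : Submodule K E) (s : ℕ) :
    (Nat.card {B : Submodule K E // B ≤ A ∧ finrank K B = s} : ℝ) =
      gaussR (Fintype.card K) (finrank K A) s := by
  rw [← card_submodule_finrank_eq]
  refine congrArg _ (Nat.card_congr ?_)
  exact (Equiv.subtypeSubtypeEquivSubtypeInter (· ≤ A) (finrank K · = s)).symm.trans
    ((Submodule.MapSubtype.orderIso A).toEquiv.subtypeEquiv fun B => by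
      rw [← Submodule.finrank_map_subtype_eq A B]; rfl).symm

theorem card_submodule_flag (r s : ℕ) :
    (Nat.card {P : Submodule K E × Submodule K E //
        P.2 ≤ P.1 ∧ finrank K P.1 = r ∧ finrank K P.2 = s} : ℝ) =
      gaussR (Fintype.card K) (finrank K E) r * gaussR (Fintype.card K) r s := by
  have := Fintype.ofFinite {A : Submodule K E // finrank K A = r}
  let e : {P : Submodule K E × Submodule K E //
        P.2 ≤ P.1 ∧ finrank K P.1 = r ∧ finrank K P.2 = s} ≃
      Σ A : {A : Submodule K E // finrank K A = r}, {B // B ≤ A.1 ∧ finrank K B = s} :=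
    { toFun P := ⟨⟨P.1.1, P.2.2.1⟩, P.1.2, P.2.1, P.2.2.2⟩
      invFun x := ⟨(x.1.1, x.2.1), x.2.2.1, x.1.2, x.2.2.2⟩ }
  rw [Nat.card_congr e, Nat.card_sigma, Nat.cast_sum, ← card_submodule_finrank_eq,
    Finset.sum_congr rfl fun A _ => (card_submodule_le_and_finrank_eq K A.1 s).trans
      (congrArg (gaussR _ · s) A.2),
    Finset.sum_const, nsmul_eq_mul, Finset.card_univ, Nat.card_eq_fintype_card]

end Counting

section Invariant

variable {Ω K E : Type*} [Fintype Ω] [DivisionRing K] [AddCommGroup E] [Module K E]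

/-- The joint law of the random subspaces `U` and `V` is invariant under the simultaneous action
of the linear automorphisms of the ambient space. -/
def IsGLInvariant (p : Ω → ℝ) (U V : Ω → Submodule K E) : Prop :=
  ∀ (e : E ≃ₗ[K] E) (A B : Submodule K E),
    law p (fun ω => (U ω, V ω)) (A.map (e : E →ₗ[K] E), B.map (e : E →ₗ[K] E)) =
      law p (fun ω => (U ω, V ω)) (A, B)

theorem law_finrank_of_forall_map [Fintype K] [Finite E] {p : Ω → ℝ} {U : Ω → Submodule K E}
    (h : ∀ (e : E ≃ₗ[K] E) (A : Submodule K E), law p U (A.map (e : E →ₗ[K] E)) = law p U A)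
    (A : Submodule K E) :
    law p (fun ω => finrank K (U ω)) (finrank K A) =
      gaussR (Fintype.card K) (finrank K E) (finrank K A) * law p U A := by
  have uniform (A' : Submodule K E) (hA' : finrank K A' = finrank K A) :
      law p U A' = law p U A := by
    obtain ⟨e, rfl⟩ := exists_linearEquiv_map_eq hA'.symm
    exact h e A
  rw [← card_submodule_finrank_eq]
  simpa [Function.comp_def] using law_comp_apply_eq_card_mul (R := fun _ => True)
    (fun _ => trivial) (fun A : Submodule K E => finrank K A) fun A' _ => uniform A'

namespace IsGLInvariant

variable {p : Ω → ℝ} {U V : Ω → Submodule K E}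

theorem law_left_map [Finite E] (h : IsGLInvariant p U V) (e : E ≃ₗ[K] E) (A : Submodule K E) :
    law p U (A.map (e : E →ₗ[K] E)) = law p U A := by
  have := Fintype.ofFinite (Submodule K E)
  have bij : Function.Bijective (Submodule.map (e : E →ₗ[K] E)) :=
    (Submodule.orderIsoMapComap e).bijective
  change law p (Prod.fst ∘ fun ω => (U ω, V ω)) _ = law p (Prod.fst ∘ fun ω => (U ω, V ω)) _
  simp only [law_comp]
  exact law_apply_of_semiconj (bij.prodMap bij) bij.injective (fun P => h e P.1 P.2)
    (fun _ => rfl) A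

theorem swap (h : IsGLInvariant p U V) : IsGLInvariant p V U := fun e A B => by
  rw [law_prod_swap, h, law_prod_swap]

theorem law_finrank_pair [Fintype K] [Finite E] (h : IsGLInvariant p U V)
    (hVU : ∀ ω, V ω ≤ U ω) {A B : Submodule K E} (hBA : B ≤ A) :
    law p (fun ω => (finrank K (U ω), finrank K (V ω))) (finrank K A, finrank K B) =
      gaussR (Fintype.card K) (finrank K E) (finrank K A) *
        gaussR (Fintype.card K) (finrank K A) (finrank K B) *
        law p (fun ω => (U ω, V ω)) (A, B) := by
  let dims (P : Submodule K E × Submodule K E) : ℕ × ℕ := (finrank K P.1, finrank K P.2)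
  have uniform (P : Submodule K E × Submodule K E) (hP : P.2 ≤ P.1) (hdims : dims P = dims (A, B)) :
      law p (fun ω => (U ω, V ω)) P = law p (fun ω => (U ω, V ω)) (A, B) := by
    obtain ⟨hA, hB⟩ := Prod.mk.inj hdims
    obtain ⟨e, hUe, hVe⟩ := exists_linearEquiv_map_flag_eq hBA hP hA.symm hB.symm
    rw [← h e A B, hUe, hVe]
  rw [← card_submodule_flag]
  simpa only [Function.comp_def, dims, Prod.mk.injEq] using
    law_comp_apply_eq_card_mul (f := fun ω => (U ω, V ω)) hVU dims uniform

theorem logb_law_ratio [Fintype K] [Finite E] (h : IsGLInvariant p U V) (hp : ∀ ω, 0 ≤ p ω)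
    (hVU : ∀ ω, V ω ≤ U ω) {ω : Ω} (hω : 0 < p ω) :
    Real.logb 2 (law p (fun ω' => (U ω', V ω')) (U ω, V ω) / (law p U (U ω) * law p V (V ω))) =
      Real.logb 2 (chi (Fintype.card K) (finrank K E) (finrank K (V ω)) /
        chi (Fintype.card K) (finrank K (U ω)) (finrank K (V ω))) +
      Real.logb 2 (law p (fun ω' => (finrank K (U ω'), finrank K (V ω')))
          (finrank K (U ω), finrank K (V ω)) /
        (law p (fun ω' => finrank K (U ω')) (finrank K (U ω)) *
          law p (fun ω' => finrank K (V ω')) (finrank K (V ω)))) := by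
  have hq : 1 < Fintype.card K := Fintype.one_lt_card
  have joint_pos := law_pos hp (fun ω' => (U ω', V ω')) hω
  have left_pos := law_pos hp U hω
  have right_pos := law_pos hp V hω
  have gauss_left_pos := gaussR_pos hq (U ω).finrank_le
  have gauss_right_pos := gaussR_pos hq (V ω).finrank_le
  have gauss_pair_pos := gaussR_pos hq (Submodule.finrank_mono (hVU ω))
  rw [← gaussR_div_gaussR hq, h.law_finrank_pair hVU (hVU ω),
    law_finrank_of_forall_map h.law_left_map, law_finrank_of_forall_map h.swap.law_left_map,
    ← Real.logb_mul (by positivity) (by positivity)]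
  congr 1
  field_simp

end IsGLInvariant

end Invariant

section MatrixSpaces

variable {F : Type} [Field F] {l m n : ℕ}

theorem colSpace_mul (A : Matrix (Fin l) (Fin m) F) (B : Matrix (Fin m) (Fin n) F) :
    colSpace (A * B) = (colSpace B).map A.mulVecLin := by
  rw [colSpace, Matrix.mulVecLin_mul, LinearMap.range_comp, colSpace]

theorem colSpace_mul_le (A : Matrix (Fin l) (Fin m) F) (B : Matrix (Fin m) (Fin n) F) :
    colSpace (A * B) ≤ colSpace A :=
  colSpace_mul A B ▸ LinearMap.map_le_range

theorem rowSpace_mul_of_isUnit {P : Matrix (Fin m) (Fin m) F} (hP : IsUnit P)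
    (X : Matrix (Fin m) (Fin n) F) : rowSpace (P * X) = rowSpace X := by
  rw [rowSpace, Matrix.transpose_mul, colSpace_mul, rowSpace, colSpace, colSpace,
    LinearMap.range_eq_top.2, Submodule.map_top]
  exact Matrix.mulVec_surjective_iff_isUnit.2 <| by simpa

theorem isGLInvariant_colSpace [Fintype F] {T M N : ℕ} {pX : Matrix (Fin T) (Fin M) F → ℝ}
    (hα : IsAlphaType pX) (pH : Matrix (Fin M) (Fin N) F → ℝ) :
    IsGLInvariant (jointPMF pX pH) (fun ω => colSpace ω.1) (fun ω => colSpace (ω.1 * ω.2)) := by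
  intro e A B
  let P := LinearMap.toMatrix' (e : (Fin T → F) →ₗ[F] (Fin T → F))
  have mulVecLin_P : P.mulVecLin = e := Matrix.toLin'_toMatrix' _
  have isUnit_P : IsUnit P := Matrix.mulVec_injective_iff_isUnit.1 <| by
    rw [← Matrix.coe_mulVecLin, mulVecLin_P]
    exact e.injective
  have map_injective : Function.Injective (Submodule.map (e : (Fin T → F) →ₗ[F] (Fin T → F))) :=
    Submodule.map_injective_of_injective e.injective
  have mul_bijective : Function.Bijective fun X : Matrix (Fin T) (Fin M) F => P * X :=
    Finite.injective_iff_bijective.1 <|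
      have := isUnit_P.invertible
      Matrix.mul_right_injective_of_invertible P
  refine law_apply_of_semiconj (σ := Prod.map (P * ·) id)
    (mul_bijective.prodMap Function.bijective_id) (map_injective.prodMap map_injective)
    (fun ω => ?_) (fun ω => ?_) (A, B)
  · exact congrArg (· * pH ω.2) (hα _ _ (rowSpace_mul_of_isUnit isUnit_P ω.1))
  · simp [Matrix.mul_assoc, colSpace_mul P, mulVecLin_P]

theorem Jrank_eq_sum [Fintype F] (q : ℕ) {T M N : ℕ} (pX : Matrix (Fin T) (Fin M) F → ℝ)
    (pH : Matrix (Fin M) (Fin N) F → ℝ) :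
    Jrank q pX pH = ∑ ω, jointPMF pX pH ω *
      Real.logb 2 (chi q (finrank F (Fin T → F)) (ω.1 * ω.2).rank /
        chi q ω.1.rank (ω.1 * ω.2).rank) := by
  have rank_mem {n : ℕ} (A : Matrix (Fin T) (Fin n) F) : A.rank ∈ range (T + 1) :=
    mem_range_succ_iff.2 A.rank_le_height
  rw [finrank_fin_fun, ← sum_law_mul (jointPMF pX pH) (f := fun ω => (ω.1.rank, (ω.1 * ω.2).rank))
    (fun ω => mk_mem_product (rank_mem ω.1) (rank_mem (ω.1 * ω.2)))
    (fun rs => Real.logb 2 (chi q T rs.2 / chi q rs.1 rs.2)), Finset.sum_product]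
  simp only [Jrank, prRankXY, law, Prod.mk.injEq]

end MatrixSpaces

theorem alpha_type_subspace_mutual_information_general {Ω K E : Type*} [Fintype Ω]
    [DivisionRing K] [Fintype K] [AddCommGroup E] [Module K E] [Finite E]
    {p : Ω → ℝ} (hp : ∀ ω, 0 ≤ p ω) {U V : Ω → Submodule K E} (hVU : ∀ ω, V ω ≤ U ω)
    (hUV : IsGLInvariant p U V) :
    mutualInfo p U V =
      ∑ ω, p ω * Real.logb 2 (chi (Fintype.card K) (finrank K E) (finrank K (V ω)) /
        chi (Fintype.card K) (finrank K (U ω)) (finrank K (V ω))) +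
      mutualInfo p (fun ω => finrank K (U ω)) (fun ω => finrank K (V ω)) := by
  rw [mutualInfo_eq_sum_law, mutualInfo_eq_sum_law, ← Finset.sum_add_distrib]
  refine Finset.sum_congr rfl fun ω _ => ?_
  rw [← mul_add]
  rcases (hp ω).eq_or_lt with hω | hω
  · rw [← hω, zero_mul, zero_mul]
  · rw [hUV.logb_law_ratio hp hVU hω]

/-- for an α-type input,
I(⟨X⟩;⟨Y⟩) = J(rank X; rank Y) + I(rank X; rank Y). -/
theorem alpha_type_subspace_mutual_information
    {F : Type} [Field F] [Fintype F] (q T M N : ℕ) (hq : Fintype.card F = q)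
    (pH : Matrix (Fin M) (Fin N) F → ℝ) (hpH : IsPMF pH)
    (pX : Matrix (Fin T) (Fin M) F → ℝ) (hpX : IsPMF pX) (hα : IsAlphaType pX) :
    miColCol pX pH = Jrank q pX pH + miRankRank pX pH := by
  subst hq
  rw [Jrank_eq_sum]
  exact alpha_type_subspace_mutual_information_general (fun _ => mul_nonneg (hpX.1 _) (hpH.1 _))
    (fun ω => colSpace_mul_le ω.1 ω.2) (isGLInvariant_colSpace hα pH)

end
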